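/- Let A be a regular (commutative Noetherian) ring and M a finitely generated A-module. For every i ≥ 0, every prime P in the support of Ext^i_A(M, A) satisfies dim A_P ≥ i; equivalently, the support of Ext^i_A(M, A) has codimension at least i in Spec A. -/

import Mathlib

open CategoryTheory

/-- A Noetherian local ring is *regular* if its Krull dimension equals its embedding
dimension, i.e. the dimension of the cotangent space `m/m²` over the residue field. -/
def IsRegularLocal (R : Type) [CommRing R] [IsLocalRing R] : Prop :=
  ringKrullDim R =
    (Module.finrank (IsLocalRing.ResidueField R) (IsLocalRing.CotangentSpace R) : WithBot ℕ∞)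


open IsLocalRing in
lemma esc_embdim {R : Type} [CommRing R] [IsLocalRing R] [IsNoetherianRing R] (x : R)
    (hx : x ∈ maximalIdeal R) (hx2 : x ∉ (maximalIdeal R)^2) [IsLocalRing (R ⧸ Ideal.span {x})] :
    (maximalIdeal (R ⧸ Ideal.span {x})).spanFinrank + 1 ≤ (maximalIdeal R).spanFinrank := by
  classical
  set v : CotangentSpace R := (maximalIdeal R).toCotangent ⟨x, hx⟩ with hv
  have hv0 : v ≠ 0 := by
    rw [hv, Ne, Ideal.toCotangent_eq_zero]; exact hx2
  have hli : LinearIndepOn (ResidueField R) id ({v} : Set (CotangentSpace R)) :=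
    LinearIndepOn.singleton hv0
  let B := hli.extend (Set.subset_univ _)
  have hvB : v ∈ B := hli.subset_extend _ rfl
  let b := Module.Basis.extend hli
  have hfin : Finite B := Module.Finite.finite_basis b
  have hcard : Nat.card B = (maximalIdeal R).spanFinrank := by
    rw [spanFinrank_maximalIdeal_eq_finrank_cotangentSpace, Module.finrank_eq_nat_card_basis b]
  have hsur : ∀ w : CotangentSpace R, ∃ y : maximalIdeal R, (maximalIdeal R).toCotangent y = w :=
    (maximalIdeal R).toCotangent_surjective
  choose l hl using hsur
  let l' : CotangentSpace R → maximalIdeal R := fun w => if w = v then ⟨x, hx⟩ else l w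
  have hl' : ∀ w, (maximalIdeal R).toCotangent (l' w) = w := by
    intro w
    by_cases h : w = v
    · simp [l', h, ← hv]
    · simp [l', h, hl]
  have hB : Submodule.span (ResidueField R) B = ⊤ := by
    have := b.span_eq
    rwa [Module.Basis.range_extend] at this
  have hspan : Submodule.span R (l' '' B) = ⊤ := by
    rw [← CotangentSpace.span_image_eq_top_iff, ← Set.image_comp]
    convert hB
    ext w; simp [hl']
  let q := Ideal.Quotient.mk (Ideal.span {x})
  have hm : maximalIdeal (R ⧸ Ideal.span {x}) = Ideal.span ((fun w => q (l' w)) '' (B \ {v})) := by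
    apply le_antisymm
    · intro z hz
      obtain ⟨y, rfl⟩ := Ideal.Quotient.mk_surjective z
      have hy : y ∈ maximalIdeal R := by
        rw [mem_maximalIdeal, mem_nonunits_iff] at hz ⊢
        exact fun h => hz (h.map q)
      have h1 : (⟨y, hy⟩ : maximalIdeal R) ∈ Submodule.span R (l' '' B) := by rw [hspan]; trivial
      have : ∀ t : maximalIdeal R, t ∈ Submodule.span R (l' '' B) →
          q t ∈ Ideal.span ((fun w => q (l' w)) '' (B \ {v})) := by
        intro t ht
        induction ht using Submodule.span_induction with
        | mem t h =>
          obtain ⟨w, hw, rfl⟩ := h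
          by_cases hwv : w = v
          · have : q (l' w) = 0 := by
              simp only [l', hwv, if_true]
              exact Ideal.Quotient.eq_zero_iff_mem.mpr (Ideal.mem_span_singleton_self x)
            rw [this]; exact zero_mem _
          · exact Ideal.subset_span ⟨w, ⟨hw, hwv⟩, rfl⟩
        | zero => simp
        | add s t _ _ h1 h2 => simpa using add_mem h1 h2
        | smul r t _ h => simpa using Ideal.mul_mem_left _ (q r) h
      exact this _ h1
    · rw [Ideal.span_le]
      rintro _ ⟨w, hw, rfl⟩
      rw [SetLike.mem_coe, mem_maximalIdeal, mem_nonunits_iff]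
      intro hu
      have : Ideal.span {x} ≤ maximalIdeal R := by
        rw [Ideal.span_le]; simpa using hx
      obtain ⟨t, ht⟩ := Ideal.Quotient.mk_surjective (hu.unit⁻¹ : (R ⧸ Ideal.span {x})ˣ).1
      have h1 : q ((l' w) * t - 1) = 0 := by
        rw [map_sub, map_mul, map_one]
        rw [show q t = _ from ht]
        simp
      have h2 := this (Ideal.Quotient.eq_zero_iff_mem.mp h1)
      have h3 := (maximalIdeal R).sub_mem ((maximalIdeal R).mul_mem_right t (l' w).2) h2
      simp at h3
  have hBf : B.Finite := hfin
  have h1 : (maximalIdeal (R ⧸ Ideal.span {x})).spanFinrank ≤ (B \ {v}).ncard := by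
    rw [hm]
    exact (Submodule.spanFinrank_span_le_ncard_of_finite (hBf.sdiff.image _)).trans
      (Set.ncard_image_le hBf.sdiff)
  rw [← hcard, Nat.card_coe_set_eq, ← Set.ncard_sdiff_singleton_add_one hvB hBf]
  omega

open IsLocalRing in
lemma esc_step {R : Type} [CommRing R] [IsRegularLocalRing R] (n : ℕ)
    (hd : ringKrullDim R = (n + 1 : ℕ)) :
    ∃ x ∈ maximalIdeal R, (∀ q ∈ minimalPrimes R, x ∉ q) ∧
      IsRegularLocalRing (R ⧸ Ideal.span {x}) ∧ ringKrullDim (R ⧸ Ideal.span {x}) = n := by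
  classical
  have hfin : (minimalPrimes R).Finite := minimalPrimes.finite_of_isNoetherianRing R
  have hex : ∃ x ∈ maximalIdeal R, x ∉ (maximalIdeal R)^2 ∧ (∀ q ∈ minimalPrimes R, x ∉ q) := by
    by_contra! hcon
    have hsub : ((maximalIdeal R : Ideal R) : Set R) ⊆
        ⋃ I ∈ (↑(insert ((maximalIdeal R)^2) hfin.toFinset) : Set (Ideal R)), ((id I : Ideal R) : Set R) := by
      intro x hx
      by_cases h : x ∈ (maximalIdeal R)^2
      · simp only [Set.mem_iUnion]
        exact ⟨_, by simp, h⟩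
      · obtain ⟨q, hq, hxq⟩ := hcon x hx h
        simp only [Set.mem_iUnion]
        exact ⟨q, by simp [hq], hxq⟩
    rw [Ideal.subset_union_prime ((maximalIdeal R)^2) ((maximalIdeal R)^2)] at hsub
    · obtain ⟨I, hI, hle⟩ := hsub
      simp only [id] at hle
      rw [Finset.mem_insert] at hI
      rcases hI with rfl | hI
      · have : maximalIdeal R = ⊥ := by
          apply Submodule.eq_bot_of_le_smul_of_le_jacobson_bot (maximalIdeal R) (maximalIdeal R)
            (IsNoetherian.noetherian _)
          · rw [smul_eq_mul, ← pow_two]; exact hle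
          · exact maximalIdeal_le_jacobson _
        have h2 := (isRegularLocalRing_iff R).mp inferInstance
        rw [this, Submodule.spanFinrank_bot, hd] at h2
        norm_cast at h2
      · rw [Set.Finite.mem_toFinset] at hI
        have hp : I.IsPrime := hI.1.1
        have : I = maximalIdeal R := le_antisymm (le_maximalIdeal hp.ne_top) hle
        subst this
        have h0 : (maximalIdeal R).height = 0 := by
          exact Ideal.height_eq_zero_iff.mpr hI
        have h1 := maximalIdeal_height_eq_ringKrullDim (R := R)
        rw [h0, hd] at h1
        norm_cast at h1
    · intro I hI h1 _
      rw [Finset.mem_insert] at hI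
      rcases hI with rfl | hI
      · exact absurd rfl h1
      · rw [Set.Finite.mem_toFinset] at hI
        exact hI.1.1
  obtain ⟨x, hx, hx2, hxq⟩ := hex
  have hne : Ideal.span {x} ≠ ⊤ := by
    intro h
    have : Ideal.span {x} ≤ maximalIdeal R := by
      rw [Ideal.span_le]; simpa using hx
    rw [h] at this
    exact (maximalIdeal.isMaximal R).ne_top (top_le_iff.mp this)
  have : Nontrivial (R ⧸ Ideal.span {x}) := Ideal.Quotient.nontrivial_iff.mpr hne
  have : IsLocalRing (R ⧸ Ideal.span {x}) :=
    IsLocalRing.of_surjective' (Ideal.Quotient.mk _) Ideal.Quotient.mk_surjective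
  have he := esc_embdim x hx hx2
  have h1 := (isRegularLocalRing_iff R).mp inferInstance
  have h2 : ringKrullDim R ≤ ringKrullDim (R ⧸ Ideal.span {x}) + 1 := by
    rw [← maximalIdeal_height_eq_ringKrullDim]
    exact Ideal.height_le_ringKrullDim_quotient_add_one hx
  have h3 := ringKrullDim_le_spanFinrank_maximalIdeal (R ⧸ Ideal.span {x})
  rw [hd] at h1 h2
  have h4 : (maximalIdeal R).spanFinrank = n + 1 := by exact_mod_cast h1
  have h5 : (maximalIdeal (R ⧸ Ideal.span {x})).spanFinrank ≤ n := by omega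
  have h6 : (n : WithBot ℕ∞) ≤ ringKrullDim (R ⧸ Ideal.span {x}) := by
    have : ((n : WithBot ℕ∞) + 1) ≤ ringKrullDim (R ⧸ Ideal.span {x}) + 1 := by exact_mod_cast h2
    exact (ENat.WithBot.add_le_add_one_right_iff).mp this
  have h7 : ((maximalIdeal (R ⧸ Ideal.span {x})).spanFinrank : WithBot ℕ∞) ≤ n := by
    exact_mod_cast h5
  exact ⟨x, hx, hxq, IsRegularLocalRing.of_spanFinrank_maximalIdeal_le _ (h7.trans h6),
    le_antisymm (h3.trans h7) h6⟩

open IsLocalRing in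
lemma esc_domain (n : ℕ) : ∀ (R : Type) [CommRing R] [IsRegularLocalRing R],
    ringKrullDim R = n → IsDomain R := by
  induction n with
  | zero =>
    intro R _ _ h
    have h2 := (isRegularLocalRing_iff R).mp inferInstance
    rw [h] at h2
    have h3 : (maximalIdeal R).spanFinrank = 0 := by exact_mod_cast h2
    rw [Submodule.spanFinrank_eq_zero_iff_eq_bot (IsNoetherian.noetherian _)] at h3
    exact (isField_iff_maximalIdeal_eq.mpr h3).isDomain
  | succ n ih =>
    intro R _ _ h
    obtain ⟨x, hx, hxq, hreg, hdim⟩ := esc_step n h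
    have hdom := ih _ hdim
    have hprime : (Ideal.span {x}).IsPrime := (Ideal.Quotient.isDomain_iff_prime _).mp hdom
    obtain ⟨q, hq, hle⟩ := Ideal.exists_minimalPrimes_le (I := ⊥) (J := Ideal.span {x}) bot_le
    have hqp : q.IsPrime := hq.1.1
    have hxq' := hxq q hq
    have : q = ⊥ := by
      apply Submodule.eq_bot_of_le_smul_of_le_jacobson_bot (maximalIdeal R) q
        (IsNoetherian.noetherian _)
      · intro y hy
        obtain ⟨z, rfl⟩ := Ideal.mem_span_singleton'.mp (hle hy)
        have hz : z ∈ q := (hqp.mem_or_mem hy).resolve_right hxq'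
        rw [mul_comm]
        exact Submodule.smul_mem_smul hx hz
      · exact maximalIdeal_le_jacobson _
    subst this
    exact IsDomain.of_bot_isPrime R

open IsLocalRing in
lemma esc_lift {R : Type} [CommRing R] [IsLocalRing R] [IsNoetherianRing R] (x : R)
    (hx : x ∈ maximalIdeal R) (hreg : IsSMulRegular R x)
    [IsLocalRing (R ⧸ Ideal.span {x})] (n : ℕ) :
    ∀ (M : Type) [AddCommGroup M] [Module R M] [Module.Finite R M], IsSMulRegular M x →
      HasProjectiveDimensionLE (ModuleCat.of (R ⧸ Ideal.span {x}) (QuotSMulTop x M)) n →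
      HasProjectiveDimensionLE (ModuleCat.of R M) n := by
  induction n with
  | zero =>
    intro M _ _ _ hM h
    rw [← projective_iff_hasProjectiveDimensionLE_zero, ← IsProjective.iff_projective] at h ⊢
    have : Module.FinitePresentation R M := Module.finitePresentation_of_finite R M
    have hf := Module.Finite.of_restrictScalars_finite R (R ⧸ Ideal.span {x}) (QuotSMulTop x M)
    have : Module.Free (R ⧸ Ideal.span {x}) (QuotSMulTop x M) :=
      Module.free_of_flat_of_isLocalRing
    have := (Module.free_quotSMulTop_iff_free R M (maximalIdeal_le_jacobson _ hx) hM).mp this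
    infer_instance
  | succ n ih =>
    intro M _ _ _ hM h
    obtain ⟨k, f, hf⟩ := Module.Finite.exists_fin' R M
    have hS := LinearMap.shortExact_shortComplexKer hf
    have hF : IsSMulRegular (Fin k → R) x := by
      intro a b hab
      funext i
      exact hreg (congrFun hab i)
    have hK : IsSMulRegular (LinearMap.ker f) x := by
      intro a b hab
      exact Subtype.ext (hF (congrArg Subtype.val hab))
    have hproj : Projective (ModuleCat.of R (Fin k → R)) := by
      rw [← IsProjective.iff_projective]; infer_instance
    refine (hS.hasProjectiveDimensionLT_X₃_iff n hproj).mpr (ih _ hK ?_)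
    let i' := (QuotSMulTop.map x (LinearMap.ker f).subtype).extendScalarsOfSurjective
      (S := R ⧸ Ideal.span {x}) Ideal.Quotient.mk_surjective
    let f' := (QuotSMulTop.map x f).extendScalarsOfSurjective
      (S := R ⧸ Ideal.span {x}) Ideal.Quotient.mk_surjective
    have hex : Function.Exact i' f' :=
      QuotSMulTop.map_exact x (LinearMap.exact_subtype_ker_map f) hf
    have hsur : Function.Surjective f' := QuotSMulTop.map_surjective x hf
    have hinj : Function.Injective i' := by
      have h1 : Function.Exact (0 : Unit →ₗ[R] LinearMap.ker f) (LinearMap.ker f).subtype := by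
        rw [LinearMap.exact_zero_iff_injective]; exact Subtype.val_injective
      have h2 := QuotSMulTop.map_first_exact_on_four_term_exact_of_isSMulRegular_last
        h1 (LinearMap.exact_subtype_ker_map f) hM
      rw [map_zero] at h2
      exact (LinearMap.exact_zero_iff_injective _ _).mp h2
    let T := ModuleCat.shortComplexOfCompEqZero i' f' hex.linearMap_comp_eq_zero
    have hT : T.ShortExact :=
      { exact := ModuleCat.shortComplex_exact _ hex
        mono_f := (ModuleCat.mono_iff_injective _).mpr hinj
        epi_g := (ModuleCat.epi_iff_surjective _).mpr hsur }
    have hpT : Projective T.X₂ := by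
      have : Module.Projective (R ⧸ Ideal.span {x}) (QuotSMulTop x (Fin k → R)) := inferInstance
      exact (IsProjective.iff_projective _).mp this
    exact (hT.hasProjectiveDimensionLT_X₃_iff n hpT).mp h

open IsLocalRing in
lemma esc_gldim (n : ℕ) : ∀ (R : Type) [CommRing R] [IsRegularLocalRing R],
    ringKrullDim R = n → ∀ (M : Type) [AddCommGroup M] [Module R M] [Module.Finite R M],
      HasProjectiveDimensionLE (ModuleCat.of R M) n := by
  induction n with
  | zero =>
    intro R _ _ h M _ _ _
    have h2 := (isRegularLocalRing_iff R).mp inferInstance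
    rw [h] at h2
    have h3 : (maximalIdeal R).spanFinrank = 0 := by exact_mod_cast h2
    rw [Submodule.spanFinrank_eq_zero_iff_eq_bot (IsNoetherian.noetherian _)] at h3
    have hf := (isField_iff_maximalIdeal_eq.mpr h3)
    rw [← projective_iff_hasProjectiveDimensionLE_zero, ← IsProjective.iff_projective]
    let := hf.toField
    exact Module.Projective.of_free
  | succ n ih =>
    intro R _ _ h M _ _ _
    have hdom := esc_domain _ R h
    obtain ⟨x, hx, hxq, hreg, hdim⟩ := esc_step n h
    have hx0 : x ≠ 0 := by
      rintro rfl
      exact hxq ⊥ (by rw [IsDomain.minimalPrimes_eq_singleton_bot]; rfl) (zero_mem _)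
    have hxR : IsSMulRegular R x := fun a b hab => mul_left_cancel₀ hx0 hab
    obtain ⟨k, f, hf⟩ := Module.Finite.exists_fin' R M
    have hS := LinearMap.shortExact_shortComplexKer hf
    have hK : IsSMulRegular (LinearMap.ker f) x := by
      intro a b hab
      apply Subtype.ext
      funext i
      exact hxR (congrFun (congrArg Subtype.val hab) i)
    have hproj : Projective (ModuleCat.of R (Fin k → R)) := by
      rw [← IsProjective.iff_projective]; infer_instance
    have hfin := Module.Finite.of_restrictScalars_finite R (R ⧸ Ideal.span {x})
      (QuotSMulTop x (LinearMap.ker f))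
    exact (hS.hasProjectiveDimensionLT_X₃_iff n hproj).mpr
      (esc_lift x hx hxR n _ hK (ih _ hdim _))
theorem esc_projloc {A : Type} [CommRing A] (p : Ideal A) [p.IsPrime]
    (X : ModuleCat.{0} A) (hX : Module.Projective A X) :
    Projective (X.localizedModule p.primeCompl) := by
  have : Module.Projective (Localization p.primeCompl) (X.localizedModule p.primeCompl) :=
    Module.projective_of_isLocalizedModule (R := A) (M := X) p.primeCompl
      (X.localizedModuleMkLinearMap p.primeCompl)
  exact (IsProjective.iff_projective _).mp this

theorem esc_kill {A : Type} [CommRing A] [IsNoetherianRing A] (p : Ideal A) [p.IsPrime] (n : ℕ) :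
    ∀ (M : ModuleCat.{0} A) [Module.Finite A M],
      HasProjectiveDimensionLE (M.localizedModule p.primeCompl) n →
      ∃ s ∈ p.primeCompl, ∀ (Y : ModuleCat.{0} A) (e : Abelian.Ext M Y (n + 1)), s • e = 0 := by
  induction n with
  | zero =>
    intro M _ hM
    have hproj : Projective (M.localizedModule p.primeCompl) :=
      projective_iff_hasProjectiveDimensionLT_one.mpr hM
    obtain ⟨F, f', _, _⟩ : ∃ (F : ModuleCat.{0} A) (f' : F ⟶ M), Epi f' ∧ Projective F := by
      obtain ⟨k, f, hf⟩ := Module.Finite.exists_fin' A M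
      exact ⟨ModuleCat.of A (Fin k → A), ModuleCat.ofHom f,
        (ModuleCat.epi_iff_surjective _).mpr hf,
        (IsProjective.iff_projective (R := A) (Fin k → A)).mp inferInstance⟩
    let f : F →ₗ[A] M := f'.hom
    let L := ModuleCat.localizedModuleFunctor (R := A) p.primeCompl
    have : Epi (L.map f') := inferInstance
    have : Projective (L.obj M) := hproj
    let σ₀ : L.obj M ⟶ L.obj F := Projective.factorThru (𝟙 (L.obj M)) (L.map f')
    have hσ₀ : σ₀ ≫ L.map f' = 𝟙 _ := Projective.factorThru_comp _ _
    let σ : M.localizedModule p.primeCompl ⟶ F.localizedModule p.primeCompl := σ₀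
    let τ : F.localizedModule p.primeCompl ⟶ M.localizedModule p.primeCompl := L.map f'
    have hσ : σ ≫ τ = 𝟙 _ := hσ₀
    let ι := M.localizedModuleMkLinearMap p.primeCompl
    let κ := F.localizedModuleMkLinearMap p.primeCompl
    have : Module.FinitePresentation A M := Module.finitePresentation_of_finite A M
    obtain ⟨h, s, hs⟩ := Module.FinitePresentation.exists_lift_of_isLocalizedModule p.primeCompl κ
      (M := M) (N := F) ((σ.hom.restrictScalars A).comp ι)
    have key : ι.comp (f.comp h) = ι.comp (s • (LinearMap.id : M →ₗ[A] M)) := by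
      ext x
      have h1 : ∀ y : F, ι (f y) = τ.hom (κ y) := by
        intro y
        exact (IsLocalizedModule.map_apply p.primeCompl κ ι f y).symm
      have h2 : κ (h x) = s • σ.hom (ι x) := LinearMap.congr_fun hs x
      have h3 : τ.hom (σ.hom (ι x)) = ι x := by
        have := congrArg (fun g => g.hom (ι x)) hσ
        exact this
      have h4 : τ.hom (s • σ.hom (ι x)) = s • τ.hom (σ.hom (ι x)) :=
        (τ.hom.restrictScalars A).map_smul (s : A) _
      change ι (f (h x)) = ι (s • x)
      rw [h1, h2, h4, h3]
      exact (ι.map_smul (s : A) x).symm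
    obtain ⟨t, ht⟩ := Module.Finite.exists_smul_of_comp_eq_of_isLocalizedModule
      p.primeCompl ι _ _ key
    refine ⟨t * s, (t * s).2, fun Y e => ?_⟩
    have h1 : ((t * s : A)) • (𝟙 M) = ModuleCat.ofHom ((t : A) • h : M →ₗ[A] F) ≫ f' := by
      ext x
      have := LinearMap.congr_fun ht x
      have h2 : (t : A) • f (h x) = (t : A) • (s : A) • x := this
      change ((t : A) * s) • x = f ((t : A) • h x)
      rw [f.map_smul, h2, mul_smul]
    have h2 : (Abelian.Ext.mk₀ f').comp e (zero_add _) = 0 := Abelian.Ext.eq_zero_of_projective _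
    calc (t * s : A) • e = (Abelian.Ext.mk₀ ((t * s : A) • 𝟙 M)).comp e (zero_add _) := by
          rw [Abelian.Ext.mk₀_smul, Abelian.Ext.smul_comp, Abelian.Ext.mk₀_id_comp]
      _ = 0 := by
          rw [h1, ← Abelian.Ext.mk₀_comp_mk₀_assoc, h2, Abelian.Ext.comp_zero]
  | succ n ih =>
    intro M _ hM
    obtain ⟨k, f, hf⟩ := Module.Finite.exists_fin' A M
    let S := f.shortComplexKer
    have hS : S.ShortExact := LinearMap.shortExact_shortComplexKer hf
    have : Projective S.X₂ := (IsProjective.iff_projective (R := A) (Fin k → A)).mp inferInstance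
    let L := ModuleCat.localizedModuleFunctor (R := A) p.primeCompl
    have hL : (S.map L).ShortExact := hS.map_of_exact L
    have : Projective (S.map L).X₂ := by
      exact esc_projloc p S.X₂ (inferInstanceAs (Module.Projective A (Fin k → A)))
    have h1 : HasProjectiveDimensionLT (S.map L).X₁ (n + 1) :=
      (hL.hasProjectiveDimensionLT_X₃_iff n this).mp hM
    have : Module.Finite A S.X₁ := inferInstanceAs (Module.Finite A (LinearMap.ker f))
    obtain ⟨s, hs, hk⟩ := ih S.X₁ h1
    refine ⟨s, hs, fun Y e => ?_⟩
    obtain ⟨x, rfl⟩ := precomp_extClass_surjective_of_projective_X₂ Y hS (n + 1) e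
    change s • hS.extClass.comp x (add_comm 1 (n + 1)) = 0
    rw [← Abelian.Ext.comp_smul, hk, Abelian.Ext.comp_zero]

theorem esc_transfer {A : Type} [CommRing A] (M Y : ModuleCat.{0} A) (j : ℕ) (s : A)
    (hs : ∀ e : Abelian.Ext M Y (j + 1), s • e = 0)
    (x : ((Ext A (ModuleCat A) (j + 1)).obj (Opposite.op M)).obj Y) : s • x = 0 := by
  let P := projectiveResolution M
  let φ := P.isoExt (R := A) (j + 1) Y
  suffices h : ∀ y : (P.complex.linearYonedaObj A Y).homology (j + 1), s • y = 0 by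
    have h2 : φ.hom.hom (s • x) = φ.hom.hom 0 := by
      rw [map_smul, map_zero]; exact h _
    exact φ.toLinearEquiv.injective h2
  intro y
  let K := P.complex.linearYonedaObj A Y
  obtain ⟨z, rfl⟩ := (ModuleCat.epi_iff_surjective (K.homologyπ (j + 1))).mp inferInstance y
  let f : P.complex.X (j + 1) ⟶ Y := (K.iCycles (j + 1)).hom z
  have hf : P.complex.d (j + 2) (j + 1) ≫ f = 0 := by
    have := congrArg (fun g => g.hom z) (K.iCycles_d (j + 1) (j + 2))
    exact this
  have h1 : s • P.extMk f (j + 2) rfl hf = P.extMk (s • f) (j + 2) rfl (by simp [hf]) := by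
    have h := P.extMk_comp_mk₀ f (j + 2) rfl hf (s • 𝟙 Y)
    rw [Abelian.Ext.mk₀_smul, Abelian.Ext.comp_smul, Abelian.Ext.comp_mk₀_id] at h
    rw [h]
    congr 1
  rw [hs] at h1
  obtain ⟨g, hg⟩ := (P.extMk_eq_zero_iff _ _ _ _ j rfl).mp h1.symm
  have h2 : s • z = (K.toCycles j (j + 1)).hom g := by
    apply (ModuleCat.mono_iff_injective (K.iCycles (j + 1))).mp inferInstance
    have h3 := congrArg (fun q => q.hom g) (K.toCycles_i j (j + 1))
    change (K.iCycles (j + 1)).hom ((K.toCycles j (j + 1)).hom g) = P.complex.d (j + 1) j ≫ g at h3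
    change (K.iCycles (j + 1)).hom (s • z) = (K.iCycles (j + 1)).hom ((K.toCycles j (j + 1)).hom g)
    rw [h3, hg, map_smul]
    rfl
  change s • (K.homologyπ (j + 1)).hom z = 0
  rw [← map_smul, h2]
  exact congrArg (fun q => q.hom g) (K.toCycles_comp_homologyπ j (j + 1))

/-- Let `A` be a regular commutative Noetherian ring and `M` a finitely generated
`A`-module.  For every `i ≥ 0`, every prime `p` in the support of `Ext^i_A(M, A)`
satisfies `dim A_p ≥ i`; i.e. the support of `Ext^i_A(M, A)` has codimension
at least `i` in `Spec A`. -/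
theorem ext_support_codim
    (A : Type) [CommRing A] [IsNoetherianRing A]
    (hreg : ∀ p : PrimeSpectrum A, IsRegularLocal (Localization.AtPrime p.asIdeal))
    (M : ModuleCat A) (hM : Module.Finite A M) (i : ℕ)
    (p : PrimeSpectrum A)
    (hp : p ∈ Module.support A
      (((Ext A (ModuleCat A) i).obj (Opposite.op M)).obj (ModuleCat.of A A))) :
    (i : WithBot ℕ∞) ≤ ringKrullDim (Localization.AtPrime p.asIdeal) := by
  by_contra hlt
  rw [not_le] at hlt
  have hr := hreg p
  have : IsNoetherianRing (Localization.AtPrime p.asIdeal) :=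
    IsLocalization.isNoetherianRing p.asIdeal.primeCompl _ inferInstance
  have : IsRegularLocalRing (Localization.AtPrime p.asIdeal) :=
    (IsRegularLocalRing.iff_finrank_cotangentSpace _).mpr hr.symm
  unfold IsRegularLocal at hr
  rw [hr] at hlt
  set n := Module.finrank (IsLocalRing.ResidueField (Localization.AtPrime p.asIdeal))
    (IsLocalRing.CotangentSpace (Localization.AtPrime p.asIdeal)) with hn
  have hni : n < i := by exact_mod_cast hlt
  obtain ⟨j, rfl⟩ : ∃ j, i = j + 1 := ⟨i - 1, by omega⟩
  have : Module.Finite (Localization.AtPrime p.asIdeal)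
      (M.localizedModule p.asIdeal.primeCompl) :=
    Module.Finite.of_isLocalizedModule p.asIdeal.primeCompl
      (M.localizedModuleMkLinearMap p.asIdeal.primeCompl)
  have hpd : HasProjectiveDimensionLE (M.localizedModule p.asIdeal.primeCompl) n :=
    esc_gldim n (Localization.AtPrime p.asIdeal) hr (M.localizedModule p.asIdeal.primeCompl)
  have hpd' : HasProjectiveDimensionLE (M.localizedModule p.asIdeal.primeCompl) j :=
    hasProjectiveDimensionLT_of_ge _ (n + 1) (j + 1) (by omega)
  obtain ⟨s, hs, hk⟩ := esc_kill p.asIdeal j M hpd'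
  refine Module.notMem_support_iff'.mpr (fun m => ⟨s, hs, ?_⟩) hp
  exact esc_transfer M _ j s (hk _) m
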